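/- arXiv:1811.02346 — 6 statements merged into one kernel-verified Lean document; each statement's English description precedes it below -/
import Mathlib

section
/- Let n ≥ 3 and let Ω ⊆ ℝⁿ be a connected open set. A smooth vector field X : Ω → ℝⁿ is a conformal Killing vector field if and only if there exist α, γ ∈ ℝⁿ, c ∈ ℝ, and a skew-symmetric real n×n matrix B such that X(x) = (α·x)x − (1/2)|x|²α + c·x + Bx + γ for all x ∈ Ω. -/
open scoped BigOperators
open Matrix

noncomputable section

/-- Euclidean dot product on `Fin n → ℝ`. -/
def dotp {n : ℕ} (u v : Fin n → ℝ) : ℝ := ∑ i, u i * v i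

/-- Squared Euclidean norm on `Fin n → ℝ`. -/
def normSq {n : ℕ} (u : Fin n → ℝ) : ℝ := ∑ i, u i ^ 2

/-- `pd X j k x = ∂ⱼ Xₖ (x)`, the partial derivative of the `k`-th component of the
vector field `X` in the `j`-th coordinate direction. -/
def pd {n : ℕ} (X : (Fin n → ℝ) → (Fin n → ℝ)) (j k : Fin n) (x : Fin n → ℝ) : ℝ :=
  fderiv ℝ (fun y => X y k) x (Pi.single j (1 : ℝ))

/-- `pdS f j x = ∂ⱼ f (x)` for a scalar function `f`. -/
def pdS {n : ℕ} (f : (Fin n → ℝ) → ℝ) (j : Fin n) (x : Fin n → ℝ) : ℝ :=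
  fderiv ℝ f x (Pi.single j (1 : ℝ))

/-- Second partial derivative `pd2 X a b c x = ∂ₐ ∂_b X_c (x)`. -/
def pd2 {n : ℕ} (X : (Fin n → ℝ) → (Fin n → ℝ)) (a b c : Fin n) (x : Fin n → ℝ) : ℝ :=
  fderiv ℝ (fun y => pd X b c y) x (Pi.single a (1 : ℝ))

/-- Gradient of a scalar function on `Fin n → ℝ`, as a vector field. -/
def grad {n : ℕ} (φ : (Fin n → ℝ) → ℝ) (x : Fin n → ℝ) : Fin n → ℝ :=
  fun i => fderiv ℝ φ x (Pi.single i (1 : ℝ))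

/-- `X` is a conformal Killing vector field on `Ω`:
`∂ⱼXₖ + ∂ₖXⱼ = λ δⱼₖ` on `Ω` for some scalar function `λ`. -/
def IsCKF {n : ℕ} (Ω : Set (Fin n → ℝ)) (X : (Fin n → ℝ) → (Fin n → ℝ)) : Prop :=
  ∃ lam : (Fin n → ℝ) → ℝ, ∀ x ∈ Ω, ∀ j k : Fin n,
    pd X j k x + pd X k j x = lam x * (if j = k then (1 : ℝ) else 0)

/-- The model conformal Killing field `X_{(α,c,B,γ)}(x) = (α·x)x − ½|x|²α + cx + Bx + γ`. -/
def Xmodel {n : ℕ} (α : Fin n → ℝ) (c : ℝ) (B : Matrix (Fin n) (Fin n) ℝ) (γ : Fin n → ℝ)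
    (x : Fin n → ℝ) : Fin n → ℝ :=
  fun k => dotp α x * x k - (1 / 2) * normSq x * α k + c * x k + B.mulVec x k + γ k

/-- The skew-symmetric matrix `u ∧ v` with entries `(u∧v)ⱼₖ = uⱼvₖ − vⱼuₖ`. -/
def wedge {n : ℕ} (u v : Fin n → ℝ) : Matrix (Fin n) (Fin n) ℝ :=
  Matrix.of fun j k => u j * v k - v j * u k

/-!
Write the conformal Killing equation as `∂ⱼXₖ + ∂ₖXⱼ = 2φ δⱼₖ`. Differentiating it and permuting
indices, as for the Christoffel symbols, expresses all second derivatives of `X` through `∇φ`: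
`∂ᵢ∂ⱼXₖ = δⱼₖ ∂ᵢφ + δᵢₖ ∂ⱼφ - δᵢⱼ ∂ₖφ`. Symmetry of the third derivatives then gives linear
relations between the entries of the Hessian of `φ`, which force it to vanish when `n ≥ 3`. Hence
`φ = α·x + c`, and the field `(α·x)x - ½|x|²α + cx` has the same conformal factor. Subtracting it
leaves a Killing field (`φ = 0`), whose second derivatives vanish by the same formula; so the
difference is affine, and its linear part is skew-symmetric.
-/

local notation "δ" => (1 : Matrix _ _ ℝ)

lemma differentiableAt_fderiv_of_contDiffAt_two {𝕜 E F : Type*} [NontriviallyNormedField 𝕜]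
    [NormedAddCommGroup E] [NormedSpace 𝕜 E] [NormedAddCommGroup F] [NormedSpace 𝕜 F]
    {f : E → F} {x : E} (hf : ContDiffAt 𝕜 2 f x) : DifferentiableAt 𝕜 (fderiv 𝕜 f) x :=
  (hf.fderiv_right (m := 1) (by norm_num)).differentiableAt one_ne_zero

section PartialDerivatives

variable {n : ℕ} {Ω : Set (Fin n → ℝ)} {f g : (Fin n → ℝ) → ℝ} {x : Fin n → ℝ}

lemma pdS_eq_of_hasFDerivAt {f' : (Fin n → ℝ) →L[ℝ] ℝ} (h : HasFDerivAt f f' x)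
    (j : Fin n) : pdS f j x = f' (Pi.single j 1) := by
  rw [pdS, h.fderiv]

lemma pdS_congr_of_isOpen (hΩ : IsOpen Ω) (h : Set.EqOn f g Ω) (hx : x ∈ Ω) (j : Fin n) :
    pdS f j x = pdS g j x := by
  rw [pdS, (h.eventuallyEq_of_mem (hΩ.mem_nhds hx)).fderiv_eq, pdS]

lemma pdS_const (c : ℝ) (j : Fin n) (x : Fin n → ℝ) :
    pdS (fun _ : Fin n → ℝ => c) j x = 0 :=
  pdS_eq_of_hasFDerivAt (hasFDerivAt_const c x) j

lemma pdS_add (hf : DifferentiableAt ℝ f x) (hg : DifferentiableAt ℝ g x) (j : Fin n) :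
    pdS (fun y => f y + g y) j x = pdS f j x + pdS g j x :=
  pdS_eq_of_hasFDerivAt (hf.hasFDerivAt.add hg.hasFDerivAt) j

lemma pdS_sub (hf : DifferentiableAt ℝ f x) (hg : DifferentiableAt ℝ g x) (j : Fin n) :
    pdS (fun y => f y - g y) j x = pdS f j x - pdS g j x :=
  pdS_eq_of_hasFDerivAt (hf.hasFDerivAt.sub hg.hasFDerivAt) j

lemma pdS_const_mul (hf : DifferentiableAt ℝ f x) (c : ℝ) (j : Fin n) :
    pdS (fun y => c * f y) j x = c * pdS f j x :=
  pdS_eq_of_hasFDerivAt (hf.hasFDerivAt.const_mul c) j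

lemma contDiffOn_pdS {m k : WithTop ℕ∞} (hΩ : IsOpen Ω) (hf : ContDiffOn ℝ k f Ω)
    (hmk : m + 1 ≤ k) (j : Fin n) : ContDiffOn ℝ m (pdS f j) Ω :=
  (hf.fderiv_of_isOpen hΩ hmk).clm_apply contDiffOn_const

lemma contDiffOn_pd {m k : WithTop ℕ∞} {X : (Fin n → ℝ) → Fin n → ℝ} (hΩ : IsOpen Ω)
    (hX : ContDiffOn ℝ k X Ω) (hmk : m + 1 ≤ k) (i j : Fin n) : ContDiffOn ℝ m (pd X i j) Ω :=
  contDiffOn_pdS hΩ (contDiffOn_pi.1 hX j) hmk i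

lemma differentiableAt_pdS (hf : ContDiffAt ℝ 2 f x) (j : Fin n) :
    DifferentiableAt ℝ (pdS f j) x :=
  (differentiableAt_fderiv_of_contDiffAt_two hf).clm_apply (differentiableAt_const _)

lemma pdS_pdS_comm (hf : ContDiffAt ℝ 2 f x) (i j : Fin n) :
    pdS (pdS f i) j x = pdS (pdS f j) i x := by
  have pdS_pdS_eq (a b : Fin n) :
      pdS (pdS f a) b x = fderiv ℝ (fderiv ℝ f) x (Pi.single b 1) (Pi.single a 1) := by
    have hfderiv := (differentiableAt_fderiv_of_contDiffAt_two hf).hasFDerivAt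
    refine (pdS_eq_of_hasFDerivAt
      (hfderiv.clm_apply (hasFDerivAt_const (Pi.single a (1 : ℝ)) x)) b).trans ?_
    simp
  rw [pdS_pdS_eq, pdS_pdS_eq]
  exact hf.isSymmSndFDerivAt (by simp) _ _

lemma exists_eq_add_const_of_pdS_eq (hΩ : IsOpen Ω) (hconn : IsPreconnected Ω)
    (hf : DifferentiableOn ℝ f Ω) (hg : DifferentiableOn ℝ g Ω)
    (h : ∀ x ∈ Ω, ∀ j, pdS f j x = pdS g j x) : ∃ c, ∀ x ∈ Ω, f x = g x + c := by
  refine hΩ.exists_eq_add_of_fderiv_eq hconn hf hg fun x hx => ?_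
  exact ContinuousLinearMap.coe_injective <| LinearMap.pi_ext' fun j =>
    LinearMap.ext_ring (h x hx j)

lemma hasFDerivAt_dotp (a x : Fin n → ℝ) :
    HasFDerivAt (dotp a) (∑ i, a i • (ContinuousLinearMap.proj i : (Fin n → ℝ) →L[ℝ] ℝ)) x :=
  HasFDerivAt.fun_sum fun i _ => (hasFDerivAt_apply i x).const_mul (a i)

lemma hasFDerivAt_normSq (x : Fin n → ℝ) :
    HasFDerivAt normSq
      (∑ i, (2 * x i) • (ContinuousLinearMap.proj i : (Fin n → ℝ) →L[ℝ] ℝ)) x :=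
  HasFDerivAt.fun_sum fun i _ => by simpa using (hasFDerivAt_apply (𝕜 := ℝ) i x).pow 2

lemma sum_smul_proj_apply_single (a : Fin n → ℝ) (j : Fin n) :
    (∑ i, a i • (ContinuousLinearMap.proj i : (Fin n → ℝ) →L[ℝ] ℝ)) (Pi.single j 1) = a j := by
  simp [Pi.single_apply]

lemma pdS_dotp_add_const (a : Fin n → ℝ) (c : ℝ) (j : Fin n) (x : Fin n → ℝ) :
    pdS (fun y => dotp a y + c) j x = a j := by
  rw [pdS_eq_of_hasFDerivAt ((hasFDerivAt_dotp a x).add_const c), sum_smul_proj_apply_single]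

lemma exists_eq_dotp_add_const_of_pdS_pdS_eq_zero (hΩ : IsOpen Ω) (hconn : IsPreconnected Ω)
    (hf : ContDiffOn ℝ 2 f Ω) (h : ∀ x ∈ Ω, ∀ i j, pdS (pdS f i) j x = 0) :
    ∃ a c, ∀ x ∈ Ω, f x = dotp a x + c := by
  have hgrad (i : Fin n) : ∃ a, ∀ x ∈ Ω, pdS f i x = 0 + a := by
    refine exists_eq_add_const_of_pdS_eq hΩ hconn
      (fun x hx => (differentiableAt_pdS
        (hf.contDiffAt (hΩ.mem_nhds hx)) i).differentiableWithinAt)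
      (differentiableOn_const 0) fun x hx j => ?_
    rw [h x hx, pdS_const]
  choose a ha using hgrad
  refine ⟨a, exists_eq_add_const_of_pdS_eq hΩ hconn (hf.differentiableOn two_ne_zero)
    (fun x _ => (hasFDerivAt_dotp a x).differentiableAt.differentiableWithinAt) fun x hx j => ?_⟩
  rw [ha j x hx, pdS_eq_of_hasFDerivAt (hasFDerivAt_dotp a x), sum_smul_proj_apply_single, zero_add]

end PartialDerivatives

/-- `X` satisfies the conformal Killing equation on `Ω` with conformal factor `φ`, normalized so
that `φ` is half the function `λ` of `IsCKF` and equals `∂ᵢXᵢ` on `Ω` for each `i`. -/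
def HasConformalFactor {n : ℕ} (Ω : Set (Fin n → ℝ)) (X : (Fin n → ℝ) → Fin n → ℝ)
    (φ : (Fin n → ℝ) → ℝ) : Prop :=
  ∀ x ∈ Ω, ∀ j k, pd X j k x + pd X k j x = 2 * φ x * δ j k

lemma isCKF_iff_exists_hasConformalFactor {n : ℕ} {Ω : Set (Fin n → ℝ)}
    {X : (Fin n → ℝ) → Fin n → ℝ} : IsCKF Ω X ↔ ∃ φ, HasConformalFactor Ω X φ := by
  constructor
  · rintro ⟨lam, h⟩
    refine ⟨fun x => lam x / 2, fun x hx j k => ?_⟩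
    rw [h x hx j k, Matrix.one_apply, mul_div_cancel₀ _ two_ne_zero]
  · rintro ⟨φ, h⟩
    refine ⟨fun x => 2 * φ x, fun x hx j k => ?_⟩
    rw [h x hx j k, Matrix.one_apply]

section Model

variable {n : ℕ} (α γ : Fin n → ℝ) (c : ℝ) (B : Matrix (Fin n) (Fin n) ℝ)

lemma contDiff_Xmodel {m : WithTop ℕ∞} : ContDiff ℝ m (Xmodel α c B γ) := by
  unfold Xmodel dotp normSq Matrix.mulVec dotProduct
  fun_prop

lemma pd_Xmodel (j k : Fin n) (x : Fin n → ℝ) :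
    pd (Xmodel α c B γ) j k x =
      (dotp α x + c) * δ j k + (α j * x k - x j * α k) + B k j := by
  have hcoord := hasFDerivAt_apply (𝕜 := ℝ) k x
  have hmodel := (((((hasFDerivAt_dotp α x).mul hcoord).sub
    (((hasFDerivAt_normSq x).const_mul (1 / 2)).mul_const (α k))).add
    (hcoord.const_mul c)).add (hasFDerivAt_dotp (B k) x)).add_const (γ k)
  refine (pdS_eq_of_hasFDerivAt hmodel j).trans ?_
  simp only [_root_.add_apply, _root_.sub_apply, _root_.smul_apply, sum_smul_proj_apply_single,
    ContinuousLinearMap.proj_apply, Pi.single_apply, smul_eq_mul, Matrix.one_apply, eq_comm]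
  ring

variable {B} in
lemma hasConformalFactor_Xmodel (hB : Bᵀ = -B) :
    HasConformalFactor Set.univ (Xmodel α c B γ) (fun x => dotp α x + c) := by
  intro x _ j k
  have hskew : B k j = -B j k := congrFun₂ hB j k
  have hsymm : δ k j = δ j k := congrFun₂ Matrix.transpose_one j k
  rw [pd_Xmodel, pd_Xmodel, hskew, hsymm]
  ring

end Model

lemma eq_zero_of_delta_mul_sub_eq {ι R : Type*} [DecidableEq ι] [Ring R] [NoZeroDivisors R]
    [CharZero R] (hι : 3 ≤ ENat.card ι) (H : Matrix ι ι R)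
    (hH : ∀ i j k l, (1 : Matrix ι ι R) i k * H j l - (1 : Matrix ι ι R) i j * H k l =
      (1 : Matrix ι ι R) l k * H j i - (1 : Matrix ι ι R) l j * H k i) :
    H = 0 := by
  have diag_eq_neg {i j : ι} (hij : i ≠ j) : H j j = -H i i := by
    simpa [hij, hij.symm] using hH i j i j
  ext j l
  rw [Matrix.zero_apply]
  obtain rfl | hjl := eq_or_ne j l
  · obtain ⟨a, haj, -⟩ := ENat.exists_ne_ne_of_three_le hι j j
    obtain ⟨b, hbj, hba⟩ := ENat.exists_ne_ne_of_three_le hι j a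
    have haa : H a a = H j j := (diag_eq_neg hba).trans (diag_eq_neg hbj).symm
    exact self_eq_neg.mp ((diag_eq_neg haj).trans (congrArg _ haa))
  · obtain ⟨i, hij, hil⟩ := ENat.exists_ne_ne_of_three_le hι j l
    simpa [hij, hil.symm, hjl.symm] using hH i j i l

namespace HasConformalFactor

variable {n : ℕ} {Ω : Set (Fin n → ℝ)} {X Y : (Fin n → ℝ) → Fin n → ℝ} {φ ψ : (Fin n → ℝ) → ℝ}

lemma mono {Ω' : Set (Fin n → ℝ)} (h : HasConformalFactor Ω X φ) (hsub : Ω' ⊆ Ω) :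
    HasConformalFactor Ω' X φ :=
  fun x hx => h x (hsub hx)

lemma congr (h : HasConformalFactor Ω X φ) (hΩ : IsOpen Ω) (hYX : Set.EqOn Y X Ω) :
    HasConformalFactor Ω Y φ := by
  intro x hx j k
  have pd_eq (a b : Fin n) : pd Y a b x = pd X a b x :=
    pdS_congr_of_isOpen hΩ (fun y hy => congrFun (hYX hy) b) hx a
  rw [pd_eq, pd_eq, h x hx]

lemma congr_factor (h : HasConformalFactor Ω X φ) (hφψ : Set.EqOn φ ψ Ω) :
    HasConformalFactor Ω X ψ := by
  intro x hx j k
  rw [h x hx, hφψ hx]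

lemma sub (hX : HasConformalFactor Ω X φ) (hY : HasConformalFactor Ω Y ψ) (hΩ : IsOpen Ω)
    (hXd : DifferentiableOn ℝ X Ω) (hYd : DifferentiableOn ℝ Y Ω) :
    HasConformalFactor Ω (X - Y) (φ - ψ) := by
  intro x hx j k
  have pd_sub (a b : Fin n) : pd (X - Y) a b x = pd X a b x - pd Y a b x :=
    pdS_sub (differentiableAt_pi.1 (hXd.differentiableAt (hΩ.mem_nhds hx)) b)
      (differentiableAt_pi.1 (hYd.differentiableAt (hΩ.mem_nhds hx)) b) a
  rw [pd_sub, pd_sub, Pi.sub_apply]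
  linarith [hX x hx j k, hY x hx j k]

lemma eqOn_pd (h : HasConformalFactor Ω X φ) (i : Fin n) : Set.EqOn φ (pd X i i) Ω := by
  intro x hx
  have hdiag := h x hx i i
  rw [Matrix.one_apply_eq] at hdiag
  linarith

lemma contDiffOn {m k : WithTop ℕ∞} (h : HasConformalFactor Ω X φ) (hΩ : IsOpen Ω)
    (hX : ContDiffOn ℝ k X Ω) (hmk : m + 1 ≤ k) (i : Fin n) : ContDiffOn ℝ m φ Ω :=
  (contDiffOn_pd hΩ hX hmk i i).congr (h.eqOn_pd i)

lemma pd2_add_pd2 (h : HasConformalFactor Ω X φ) (hΩ : IsOpen Ω) (hX : ContDiffOn ℝ 2 X Ω)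
    {x : Fin n → ℝ} (hx : x ∈ Ω) (i j k : Fin n) :
    pd2 X i j k x + pd2 X i k j x = 2 * δ j k * pdS φ i x := by
  have hpd (a b : Fin n) : DifferentiableAt ℝ (pd X a b) x :=
    differentiableAt_pdS ((contDiffOn_pi.1 hX b).contDiffAt (hΩ.mem_nhds hx)) a
  have hφ : DifferentiableAt ℝ φ x :=
    ((h.contDiffOn (m := 1) hΩ hX (by norm_num) i).differentiableOn
      one_ne_zero).differentiableAt (hΩ.mem_nhds hx)
  calc pd2 X i j k x + pd2 X i k j x
      = pdS (fun y => pd X j k y + pd X k j y) i x := (pdS_add (hpd j k) (hpd k j) i).symm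
    _ = pdS (fun y => 2 * δ j k * φ y) i x :=
        pdS_congr_of_isOpen hΩ (fun y hy => (h y hy j k).trans (mul_right_comm _ _ _)) hx i
    _ = 2 * δ j k * pdS φ i x := pdS_const_mul hφ _ i

lemma pd2_eq (h : HasConformalFactor Ω X φ) (hΩ : IsOpen Ω) (hX : ContDiffOn ℝ 2 X Ω)
    {x : Fin n → ℝ} (hx : x ∈ Ω) (i j k : Fin n) :
    pd2 X i j k x = δ j k * pdS φ i x + δ i k * pdS φ j x - δ i j * pdS φ k x := by
  have pd2_comm (a b c : Fin n) : pd2 X a b c x = pd2 X b a c x :=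
    pdS_pdS_comm ((contDiffOn_pi.1 hX c).contDiffAt (hΩ.mem_nhds hx)) b a
  linarith [h.pd2_add_pd2 hΩ hX hx i j k, h.pd2_add_pd2 hΩ hX hx j i k,
    h.pd2_add_pd2 hΩ hX hx k i j, pd2_comm i j k, pd2_comm j k i, pd2_comm k i j]

lemma pdS_pd2_eq (h : HasConformalFactor Ω X φ) (hΩ : IsOpen Ω) (hX : ContDiffOn ℝ 3 X Ω)
    {x : Fin n → ℝ} (hx : x ∈ Ω) (i j k l : Fin n) :
    pdS (pd2 X i j k) l x =
      δ j k * pdS (pdS φ i) l x + δ i k * pdS (pdS φ j) l x - δ i j * pdS (pdS φ k) l x := by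
  have hφ : ContDiffOn ℝ 2 φ Ω := h.contDiffOn hΩ hX (by norm_num) i
  have hgrad (a : Fin n) : DifferentiableAt ℝ (pdS φ a) x :=
    differentiableAt_pdS (hφ.contDiffAt (hΩ.mem_nhds hx)) a
  have hscaled (r : ℝ) (a : Fin n) : DifferentiableAt ℝ (fun y => r * pdS φ a y) x :=
    (hgrad a).const_mul r
  rw [pdS_congr_of_isOpen hΩ (fun y hy => h.pd2_eq hΩ (hX.of_le (by norm_num)) hy i j k) hx,
    pdS_sub ((hscaled _ i).fun_add (hscaled _ j)) (hscaled _ k),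
    pdS_add (hscaled _ i) (hscaled _ j), pdS_const_mul (hgrad i), pdS_const_mul (hgrad j),
    pdS_const_mul (hgrad k)]

lemma delta_mul_pdS_pdS_sub (h : HasConformalFactor Ω X φ) (hΩ : IsOpen Ω)
    (hX : ContDiffOn ℝ 3 X Ω) {x : Fin n → ℝ} (hx : x ∈ Ω) (i j k l : Fin n) :
    δ i k * pdS (pdS φ j) l x - δ i j * pdS (pdS φ k) l x =
      δ l k * pdS (pdS φ j) i x - δ l j * pdS (pdS φ k) i x := by
  have hφ : ContDiffOn ℝ 2 φ Ω := h.contDiffOn hΩ hX (by norm_num) i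
  have hthird : pdS (pd2 X i j k) l x = pdS (pd2 X l j k) i x :=
    pdS_pdS_comm ((contDiffOn_pd hΩ hX (by norm_num) j k).contDiffAt (hΩ.mem_nhds hx)) i l
  have hhess : pdS (pdS φ i) l x = pdS (pdS φ l) i x :=
    pdS_pdS_comm (hφ.contDiffAt (hΩ.mem_nhds hx)) i l
  rw [h.pdS_pd2_eq hΩ hX hx, h.pdS_pd2_eq hΩ hX hx, hhess] at hthird
  linarith

lemma pdS_pdS_eq_zero (h : HasConformalFactor Ω X φ) (hn : 3 ≤ n) (hΩ : IsOpen Ω)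
    (hX : ContDiffOn ℝ 3 X Ω) {x : Fin n → ℝ} (hx : x ∈ Ω) (i j : Fin n) :
    pdS (pdS φ i) j x = 0 := by
  have hcard : 3 ≤ ENat.card (Fin n) := by simpa using mod_cast hn
  exact congrFun₂ (eq_zero_of_delta_mul_sub_eq hcard
    (Matrix.of fun a b => pdS (pdS φ a) b x) (h.delta_mul_pdS_pdS_sub hΩ hX hx)) i j

lemma exists_eq_dotp_add_const (h : HasConformalFactor Ω X φ) (hn : 3 ≤ n) (hΩ : IsOpen Ω)
    (hconn : IsPreconnected Ω) (hX : ContDiffOn ℝ 3 X Ω) :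
    ∃ α c, ∀ x ∈ Ω, φ x = dotp α x + c :=
  exists_eq_dotp_add_const_of_pdS_pdS_eq_zero hΩ hconn
    (h.contDiffOn hΩ hX (by norm_num) ⟨0, by lia⟩)
    fun _ hx => h.pdS_pdS_eq_zero hn hΩ hX hx

lemma exists_skew_mulVec_add_of_zero (h : HasConformalFactor Ω X 0) (hΩ : IsOpen Ω)
    (hconn : IsConnected Ω) (hX : ContDiffOn ℝ 2 X Ω) :
    ∃ (B : Matrix (Fin n) (Fin n) ℝ) (γ : Fin n → ℝ),
      Bᵀ = -B ∧ ∀ x ∈ Ω, X x = B *ᵥ x + γ := by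
  have haffine (k : Fin n) : ∃ b c, ∀ x ∈ Ω, X x k = dotp b x + c := by
    refine exists_eq_dotp_add_const_of_pdS_pdS_eq_zero hΩ hconn.isPreconnected
      (contDiffOn_pi.1 hX k) fun x hx j i => ?_
    have pdS_zero (a : Fin n) : pdS (0 : (Fin n → ℝ) → ℝ) a x = 0 := pdS_const 0 a x
    exact (h.pd2_eq hΩ hX hx i j k).trans (by simp [pdS_zero])
  choose B γ hBγ using haffine
  refine ⟨B, γ, ?_, fun x hx => funext fun k => hBγ k x hx⟩
  obtain ⟨x₀, hx₀⟩ := hconn.nonempty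
  have pd_eq (j k : Fin n) : pd X j k x₀ = B k j :=
    (pdS_congr_of_isOpen hΩ (hBγ k) hx₀ j).trans (pdS_dotp_add_const (B k) (γ k) j x₀)
  ext j k
  have hkilling := h x₀ hx₀ j k
  rw [pd_eq, pd_eq, Pi.zero_apply, mul_zero, zero_mul] at hkilling
  exact eq_neg_of_add_eq_zero_left hkilling

lemma exists_eq_Xmodel (h : HasConformalFactor Ω X φ) (hn : 3 ≤ n) (hΩ : IsOpen Ω)
    (hconn : IsConnected Ω) (hX : ContDiffOn ℝ 3 X Ω) :
    ∃ (α γ : Fin n → ℝ) (c : ℝ) (B : Matrix (Fin n) (Fin n) ℝ),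
      Bᵀ = -B ∧ ∀ x ∈ Ω, X x = Xmodel α c B γ x := by
  obtain ⟨α, c, hφ⟩ := h.exists_eq_dotp_add_const hn hΩ hconn.isPreconnected hX
  have hmodel : ContDiff ℝ 3 (Xmodel α c 0 0) := contDiff_Xmodel α 0 c 0
  have hmodel_factor : HasConformalFactor Ω (Xmodel α c 0 0) φ :=
    ((hasConformalFactor_Xmodel α 0 c (by simp)).mono Ω.subset_univ).congr_factor
      fun x hx => (hφ x hx).symm
  have hkilling : HasConformalFactor Ω (X - Xmodel α c 0 0) 0 := by
    simpa using h.sub hmodel_factor hΩ (hX.differentiableOn three_ne_zero)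
      (hmodel.differentiable three_ne_zero).differentiableOn
  obtain ⟨B, γ, hB, hdiff⟩ := hkilling.exists_skew_mulVec_add_of_zero hΩ hconn
    ((hX.sub hmodel.contDiffOn).of_le (by norm_num))
  refine ⟨α, γ, c, B, hB, fun x hx => ?_⟩
  rw [sub_eq_iff_eq_add.mp (hdiff x hx)]
  ext k
  simp only [Pi.add_apply, Xmodel, zero_mulVec, Pi.zero_apply, add_zero]
  ring

end HasConformalFactor

theorem stmt_0_general {n : ℕ} (hn : 3 ≤ n) (Ω : Set (Fin n → ℝ)) (hΩ : IsOpen Ω)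
    (hconn : IsConnected Ω) (X : (Fin n → ℝ) → (Fin n → ℝ)) (hX : ContDiffOn ℝ 3 X Ω) :
    IsCKF Ω X ↔
      ∃ (α γ : Fin n → ℝ) (c : ℝ) (B : Matrix (Fin n) (Fin n) ℝ),
        Bᵀ = -B ∧ ∀ x ∈ Ω, X x = Xmodel α c B γ x := by
  rw [isCKF_iff_exists_hasConformalFactor]
  constructor
  · rintro ⟨φ, h⟩
    exact h.exists_eq_Xmodel hn hΩ hconn hX
  · rintro ⟨α, γ, c, B, hB, hXeq⟩
    exact ⟨_, ((hasConformalFactor_Xmodel α γ c hB).mono Ω.subset_univ).congr hΩ hXeq⟩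

/-- classification of conformal Killing vector fields in `ℝⁿ`, `n ≥ 3`. -/
theorem stmt_0 {n : ℕ} (hn : 3 ≤ n) (Ω : Set (Fin n → ℝ)) (hΩ : IsOpen Ω)
    (hconn : IsConnected Ω) (X : (Fin n → ℝ) → (Fin n → ℝ))
    (hX : ContDiffOn ℝ (⊤ : ℕ∞) X Ω) :
    IsCKF Ω X ↔
      ∃ (α γ : Fin n → ℝ) (c : ℝ) (B : Matrix (Fin n) (Fin n) ℝ),
        Bᵀ = -B ∧ ∀ x ∈ Ω, X x = Xmodel α c B γ x := by
  exact stmt_0_general hn Ω hΩ hconn X (contDiffOn_infty.1 hX 3)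
end
end

section
/- Let n ≥ 3, let Ω, Ω̃ ⊆ ℝⁿ be open sets, let F : Ω̃ → Ω be a smooth map, and let κ : Ω̃ → (0,∞) be a smooth function such that κ(x)·DF(x)ᵀ·DF(x) = Id for all x ∈ Ω̃ (i.e. F is conformal). If X : Ω → ℝⁿ is a smooth conformal Killing vector field, then the vector field X̃(x) := κ(x)·DF(x)ᵀ·X(F(x)) is a conformal Killing vector field on Ω̃. -/
open scoped BigOperators
open Matrix

noncomputable section

/-- The Jacobian matrix of a map `F : ℝⁿ → ℝⁿ` at `x`, with entries `(DF)ⱼₖ = ∂ₖFⱼ`. -/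
def jac {n : ℕ} (F : (Fin n → ℝ) → (Fin n → ℝ)) (x : Fin n → ℝ) :
    Matrix (Fin n) (Fin n) ℝ :=
  Matrix.of fun j k => fderiv ℝ (fun y => F y j) x (Pi.single k (1 : ℝ))


/-!
Conformality says that `κ DFᵀ` is the inverse of `DF`, so `Y := κ DFᵀ (X ∘ F)` is `F`-related to
`X`, i.e. `DF Y = X ∘ F`. Lie derivatives of metrics are natural under related fields,
`L_Y (F^* g) = F^* (L_X g)`; this is the chain rule together with the symmetry of `D²F`. For the
Euclidean metric `g`, being conformal Killing means `L_X g = λ g`, and conformality of `F` means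
`F^* g = κ⁻¹ g`. Hence `(∂_Y κ⁻¹) g + κ⁻¹ L_Y g = (λ ∘ F) κ⁻¹ g`, and `L_Y g` is a multiple of `g`.
-/

open scoped Topology

theorem differentiableAt_of_smul_const {𝕜 E V : Type*} [NontriviallyNormedField 𝕜]
    [NormedAddCommGroup E] [NormedSpace 𝕜 E] [NormedAddCommGroup V] [NormedSpace 𝕜 V]
    [SeparatingDual 𝕜 V] {μ : E → 𝕜} {x : E} {c : V} (hc : c ≠ 0)
    (hμ : DifferentiableAt 𝕜 (fun y => μ y • c) x) : DifferentiableAt 𝕜 μ x := by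
  obtain ⟨ℓ, hℓ⟩ := SeparatingDual.exists_eq_one (R := 𝕜) hc
  simpa [Function.comp_def, hℓ] using ℓ.differentiableAt.comp x hμ

section LieDerivative

set_option maxSynthPendingDepth 3

variable {E E' : Type*} [NormedAddCommGroup E] [NormedSpace ℝ E]
  [NormedAddCommGroup E'] [NormedSpace ℝ E']

/-- The Lie derivative `L_Y g` at `x` of a field `g` of bilinear forms along the vector field `Y`:
`(L_Y g)(u, v) = (∂_Y g)(u, v) + g(DY u, v) + g(u, DY v)`. For constant `g` the equation
`L_Y g = λ g` is the conformal Killing equation. -/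
def lieDerivForm (g : E → E →L[ℝ] E →L[ℝ] ℝ) (Y : E → E) (x : E) : E →L[ℝ] E →L[ℝ] ℝ :=
  fderiv ℝ g x (Y x) + (g x).bilinearComp (fderiv ℝ Y x) (.id ℝ E) +
    (g x).bilinearComp (.id ℝ E) (fderiv ℝ Y x)

/-- The pullback `G^* g` of a field `g` of bilinear forms by a map `G`:
`(G^* g)_x(u, v) = g_{G x}(DG u, DG v)`. A map is conformal if it pulls the target metric back to a
multiple of the source metric. -/
def pullbackForm (G : E → E') (g : E' → E' →L[ℝ] E' →L[ℝ] ℝ) (x : E) : E →L[ℝ] E →L[ℝ] ℝ :=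
  (g (G x)).bilinearComp (fderiv ℝ G x) (fderiv ℝ G x)

variable {g g' : E → E →L[ℝ] E →L[ℝ] ℝ} {h : E' → E' →L[ℝ] E' →L[ℝ] ℝ} {G : E → E'}
  {X : E' → E'} {Y : E → E} {κ μ : E → ℝ} {x : E}

theorem lieDerivForm_apply (u v : E) :
    lieDerivForm g Y x u v =
      fderiv ℝ g x (Y x) u v + g x (fderiv ℝ Y x u) v + g x u (fderiv ℝ Y x v) :=
  rfl

theorem lieDerivForm_const_apply (B : E →L[ℝ] E →L[ℝ] ℝ) (u v : E) :
    lieDerivForm (fun _ => B) Y x u v = B (fderiv ℝ Y x u) v + B u (fderiv ℝ Y x v) := by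
  simp [lieDerivForm_apply]

theorem lieDerivForm_congr (hg : g =ᶠ[𝓝 x] g') : lieDerivForm g Y x = lieDerivForm g' Y x := by
  simp only [lieDerivForm, hg.fderiv_eq, hg.eq_of_nhds]

theorem lieDerivForm_smul (hμ : DifferentiableAt ℝ μ x) (hg : DifferentiableAt ℝ g x) :
    lieDerivForm (fun y => μ y • g y) Y x =
      fderiv ℝ μ x (Y x) • g x + μ x • lieDerivForm g Y x := by
  ext u v
  simp only [lieDerivForm_apply, fderiv_fun_smul hμ hg, _root_.add_apply, _root_.smul_apply,
    ContinuousLinearMap.smulRight_apply, smul_eq_mul]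
  ring

theorem differentiableAt_fderiv_of_contDiffAt (hG : ContDiffAt ℝ 2 G x) :
    DifferentiableAt ℝ (fderiv ℝ G) x :=
  (hG.fderiv_right (m := 1) (by norm_num)).differentiableAt one_ne_zero

theorem differentiableAt_pullbackForm (hG : ContDiffAt ℝ 2 G x)
    (hh : DifferentiableAt ℝ h (G x)) : DifferentiableAt ℝ (pullbackForm G h) x := by
  have hhG : DifferentiableAt ℝ (fun y => h (G y)) x :=
    hh.comp x (hG.differentiableAt two_ne_zero)
  have hleft := (ContinuousLinearMap.flipₗᵢ ℝ E E' ℝ).differentiableAt.comp x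
    (hhG.clm_comp (differentiableAt_fderiv_of_contDiffAt hG))
  exact (ContinuousLinearMap.flipₗᵢ ℝ E E ℝ).differentiableAt.comp x
    (hleft.clm_comp (differentiableAt_fderiv_of_contDiffAt hG))

theorem fderiv_pullbackForm_apply (hG : ContDiffAt ℝ 2 G x)
    (hh : DifferentiableAt ℝ h (G x)) (w u v : E) :
    fderiv ℝ (pullbackForm G h) x w u v =
      fderiv ℝ h (G x) (fderiv ℝ G x w) (fderiv ℝ G x u) (fderiv ℝ G x v) +
        h (G x) (fderiv ℝ (fderiv ℝ G) x w u) (fderiv ℝ G x v) +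
        h (G x) (fderiv ℝ G x u) (fderiv ℝ (fderiv ℝ G) x w v) := by
  have hDG (a : E) := (differentiableAt_fderiv_of_contDiffAt hG).hasFDerivAt.clm_apply
    (hasFDerivAt_const a x)
  have hhG := hh.hasFDerivAt.comp x (hG.differentiableAt two_ne_zero).hasFDerivAt
  have hlhs := ((differentiableAt_pullbackForm hG hh).hasFDerivAt.clm_apply
    (hasFDerivAt_const u x)).clm_apply (hasFDerivAt_const v x)
  have hrhs := (hhG.clm_apply (hDG u)).clm_apply (hDG v)
  have hderiv := congrArg (fun L => L w) (hlhs.unique hrhs)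
  simp only [ContinuousLinearMap.comp_zero, zero_add, ContinuousLinearMap.flip_apply,
    Function.comp_apply, ContinuousLinearMap.flip_add, _root_.add_apply,
    ContinuousLinearMap.comp_apply] at hderiv
  rw [hderiv]
  ring

theorem fderiv_fderiv_apply_add_of_related (hG : ContDiffAt ℝ 2 G x) (hY : DifferentiableAt ℝ Y x)
    (hX : DifferentiableAt ℝ X (G x)) (hYX : (fun y => fderiv ℝ G y (Y y)) =ᶠ[𝓝 x] X ∘ G) (u : E) :
    fderiv ℝ (fderiv ℝ G) x u (Y x) + fderiv ℝ G x (fderiv ℝ Y x u) =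
      fderiv ℝ X (G x) (fderiv ℝ G x u) := by
  have hderiv := congrArg (fun L => L u) (hYX.fderiv_eq (𝕜 := ℝ))
  rw [fderiv_clm_apply (differentiableAt_fderiv_of_contDiffAt hG) hY,
    fderiv_comp x hX (hG.differentiableAt two_ne_zero)] at hderiv
  simpa [add_comm] using hderiv

theorem lieDerivForm_pullbackForm (hG : ContDiffAt ℝ 2 G x) (hY : DifferentiableAt ℝ Y x)
    (hX : DifferentiableAt ℝ X (G x)) (hYX : (fun y => fderiv ℝ G y (Y y)) =ᶠ[𝓝 x] X ∘ G)
    (hh : DifferentiableAt ℝ h (G x)) :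
    lieDerivForm (pullbackForm G h) Y x = pullbackForm G (lieDerivForm h X) x := by
  ext u v
  have hsymm (w : E) : fderiv ℝ (fderiv ℝ G) x (Y x) w = fderiv ℝ (fderiv ℝ G) x w (Y x) :=
    (hG.isSymmSndFDerivAt (by simp)).eq _ _
  have hYx : fderiv ℝ G x (Y x) = X (G x) := hYX.eq_of_nhds
  have hDY := fderiv_fderiv_apply_add_of_related hG hY hX hYX
  simp only [lieDerivForm_apply, fderiv_pullbackForm_apply hG hh, pullbackForm,
    ContinuousLinearMap.bilinearComp_apply, ← hDY, hsymm, hYx, map_add, _root_.add_apply]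
  ring

theorem exists_lieDerivForm_eq_smul_of_conformal {B : E →L[ℝ] E →L[ℝ] ℝ}
    {B' : E' →L[ℝ] E' →L[ℝ] ℝ} {c : ℝ} (hG : ContDiffAt ℝ 2 G x) (hY : DifferentiableAt ℝ Y x)
    (hX : DifferentiableAt ℝ X (G x)) (hYX : (fun y => fderiv ℝ G y (Y y)) =ᶠ[𝓝 x] X ∘ G)
    (hconf : ∀ᶠ y in 𝓝 x, κ y • pullbackForm G (fun _ => B') y = B)
    (hXB' : lieDerivForm (fun _ => B') X (G x) = c • B') :
    ∃ c' : ℝ, lieDerivForm (fun _ => B) Y x = c' • B := by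
  rcases eq_or_ne B 0 with rfl | hB
  · exact ⟨0, by ext; simp [lieDerivForm_const_apply]⟩
  have hκ : ∀ᶠ y in 𝓝 x, κ y ≠ 0 := hconf.mono fun y hy h0 => hB (by simp [← hy, h0])
  have hpull : pullbackForm G (fun _ => B') =ᶠ[𝓝 x] fun y => (κ y)⁻¹ • B := by
    filter_upwards [hconf, hκ] with y hy hκy
    rw [← hy, inv_smul_smul₀ hκy]
  have hμ : DifferentiableAt ℝ (fun y => (κ y)⁻¹) x :=
    differentiableAt_of_smul_const hB <| hpull.differentiableAt_iff.1 <|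
      differentiableAt_pullbackForm hG (differentiableAt_const B')
  have hlie : fderiv ℝ (fun y => (κ y)⁻¹) x (Y x) • B + (κ x)⁻¹ • lieDerivForm (fun _ => B) Y x =
      c • (κ x)⁻¹ • B := by
    calc
      _ = lieDerivForm (pullbackForm G fun _ => B') Y x := by
        rw [lieDerivForm_congr hpull, lieDerivForm_smul hμ (differentiableAt_const B)]
      _ = pullbackForm G (lieDerivForm (fun _ => B') X) x :=
        lieDerivForm_pullbackForm hG hY hX hYX (differentiableAt_const B')
      _ = c • pullbackForm G (fun _ => B') x := by
        ext; simp [pullbackForm, hXB']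
      _ = c • (κ x)⁻¹ • B := by rw [hpull.eq_of_nhds]
  refine ⟨c - κ x * fderiv ℝ (fun y => (κ y)⁻¹) x (Y x), ?_⟩
  have hκx : κ x ≠ 0 := hκ.self_of_nhds
  rw [← smul_right_inj (inv_ne_zero hκx), eq_sub_of_add_eq' hlie, smul_comm c, sub_smul, smul_sub,
    mul_smul, inv_smul_smul₀ hκx]

theorem differentiableAt_vectorField_pullback [CompleteSpace E] (hG : ContDiffAt ℝ 2 G x)
    (hinv : (fderiv ℝ G x).IsInvertible) (hX : DifferentiableAt ℝ X (G x)) :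
    DifferentiableAt ℝ (VectorField.pullback ℝ G X) x :=
  have hinverse : DifferentiableAt ℝ (fun y => (fderiv ℝ G y).inverse) x :=
    (hinv.contDiffAt_map_inverse.differentiableAt one_ne_zero).comp x
      (differentiableAt_fderiv_of_contDiffAt hG)
  hinverse.clm_apply (hX.comp x (hG.differentiableAt two_ne_zero))

end LieDerivative

section Euclidean

variable {n : ℕ} {Ω : Set (Fin n → ℝ)} {F X : (Fin n → ℝ) → Fin n → ℝ} {x : Fin n → ℝ} {c : ℝ}

/-- The Euclidean metric of `ℝⁿ`, as a continuous bilinear form. It is built from the dot product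
because the norm of the type `Fin n → ℝ` is the sup norm. -/
def euclideanForm (n : ℕ) : (Fin n → ℝ) →L[ℝ] (Fin n → ℝ) →L[ℝ] ℝ :=
  (dotProductBilin ℝ ℝ).toContinuousBilinearMap

@[simp]
theorem euclideanForm_apply (u v : Fin n → ℝ) : euclideanForm n u v = u ⬝ᵥ v :=
  rfl

theorem fderiv_eq_jac_mulVec (hF : DifferentiableAt ℝ F x) (v : Fin n → ℝ) :
    fderiv ℝ F x v = jac F x *ᵥ v := by
  have hjac : jac F x = LinearMap.toMatrix' (fderiv ℝ F x : (Fin n → ℝ) →ₗ[ℝ] Fin n → ℝ) := by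
    ext i j
    simp [jac, LinearMap.toMatrix'_apply, fderiv_apply hF]
  rw [hjac, LinearMap.toMatrix'_mulVec, ContinuousLinearMap.coe_coe]

theorem lieDerivForm_euclideanForm_single (hX : DifferentiableAt ℝ X x) (j k : Fin n) :
    lieDerivForm (fun _ => euclideanForm n) X x (Pi.single j 1) (Pi.single k 1) =
      pd X j k x + pd X k j x := by
  simp [lieDerivForm_const_apply, pd, fderiv_apply hX]

theorem lieDerivForm_euclideanForm_eq_smul_iff (hX : DifferentiableAt ℝ X x) :
    lieDerivForm (fun _ => euclideanForm n) X x = c • euclideanForm n ↔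
      ∀ j k, pd X j k x + pd X k j x = c * if j = k then 1 else 0 := by
  simp only [← lieDerivForm_euclideanForm_single hX]
  constructor
  · intro h j k
    simp [h, Pi.single_apply, eq_comm]
  · intro h
    refine ContinuousLinearMap.coe_injective <| (Pi.basisFun ℝ (Fin n)).ext fun j => ?_
    refine ContinuousLinearMap.coe_injective <| (Pi.basisFun ℝ (Fin n)).ext fun k => ?_
    simp [h, Pi.single_apply, eq_comm]

theorem isCKF_iff_lieDerivForm (hX : ∀ x ∈ Ω, DifferentiableAt ℝ X x) :
    IsCKF Ω X ↔
      ∀ x ∈ Ω, ∃ c : ℝ, lieDerivForm (fun _ => euclideanForm n) X x = c • euclideanForm n := by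
  constructor
  · rintro ⟨lam, hlam⟩ x hx
    exact ⟨lam x, (lieDerivForm_euclideanForm_eq_smul_iff (hX x hx)).2 (hlam x hx)⟩
  · intro h
    choose! lam hlam using h
    exact ⟨lam, fun x hx => (lieDerivForm_euclideanForm_eq_smul_iff (hX x hx)).1 (hlam x hx)⟩

theorem smul_pullbackForm_euclideanForm (hF : DifferentiableAt ℝ F x)
    (hconf : c • ((jac F x)ᵀ * jac F x) = 1) :
    c • pullbackForm F (fun _ => euclideanForm n) x = euclideanForm n := by
  refine ContinuousLinearMap.ext fun u => ContinuousLinearMap.ext fun v => ?_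
  calc
    c • ((fderiv ℝ F x u) ⬝ᵥ (fderiv ℝ F x v)) = u ⬝ᵥ (c • ((jac F x)ᵀ * jac F x)) *ᵥ v := by
      rw [fderiv_eq_jac_mulVec hF, fderiv_eq_jac_mulVec hF, smul_mulVec, dotProduct_smul,
        ← mulVec_mulVec, dotProduct_mulVec u, vecMul_transpose]
    _ = u ⬝ᵥ v := by rw [hconf, one_mulVec]

theorem fderiv_smul_jac_transpose_mulVec (hF : DifferentiableAt ℝ F x)
    (hconf : c • ((jac F x)ᵀ * jac F x) = 1) (w : Fin n → ℝ) :
    fderiv ℝ F x (c • (jac F x)ᵀ *ᵥ w) = w := by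
  rw [fderiv_eq_jac_mulVec hF, ← smul_mulVec, mulVec_mulVec,
    mul_eq_one_comm.mp (by rwa [smul_mul_assoc]), one_mulVec]

theorem isInvertible_fderiv_of_conformal (hF : DifferentiableAt ℝ F x)
    (hconf : c • ((jac F x)ᵀ * jac F x) = 1) : (fderiv ℝ F x).IsInvertible := by
  have hsurj : Function.Surjective (fderiv ℝ F x) := fun w =>
    ⟨_, fderiv_smul_jac_transpose_mulVec hF hconf w⟩
  have hinj : Function.Injective (fderiv ℝ F x) :=
    LinearMap.injective_iff_surjective.2 hsurj
  exact ⟨(LinearEquiv.ofBijective (fderiv ℝ F x).toLinearMap ⟨hinj, hsurj⟩).toContinuousLinearEquiv,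
    rfl⟩

theorem smul_jac_transpose_mulVec_eq_pullback (hF : DifferentiableAt ℝ F x)
    (hconf : c • ((jac F x)ᵀ * jac F x) = 1) :
    c • (jac F x)ᵀ *ᵥ X (F x) = VectorField.pullback ℝ F X x :=
  ((isInvertible_fderiv_of_conformal hF hconf).inverse_apply_eq.2
    (fderiv_smul_jac_transpose_mulVec hF hconf _).symm).symm

end Euclidean

theorem stmt_3_general {n : ℕ} {Ω Ω' : Set (Fin n → ℝ)} (hΩ' : IsOpen Ω')
    {F : (Fin n → ℝ) → (Fin n → ℝ)} (hF : ContDiffOn ℝ 2 F Ω') (hmaps : Set.MapsTo F Ω' Ω)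
    {κ : (Fin n → ℝ) → ℝ} (hconf : ∀ x ∈ Ω', κ x • ((jac F x)ᵀ * jac F x) = 1)
    {X : (Fin n → ℝ) → (Fin n → ℝ)} (hX : ∀ x ∈ Ω, DifferentiableAt ℝ X x) (hckf : IsCKF Ω X) :
    IsCKF Ω' (fun x => κ x • (jac F x)ᵀ.mulVec (X (F x))) := by
  have hFC2 (x) (hx : x ∈ Ω') : ContDiffAt ℝ 2 F x := hF.contDiffAt (hΩ'.mem_nhds hx)
  have hFdiff (x) (hx : x ∈ Ω') : DifferentiableAt ℝ F x :=
    (hFC2 x hx).differentiableAt two_ne_zero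
  have hnear (x) (hx : x ∈ Ω') : ∀ᶠ y in 𝓝 x, y ∈ Ω' := hΩ'.mem_nhds hx
  have hY (x) (hx : x ∈ Ω') :
      DifferentiableAt ℝ (fun y => κ y • (jac F y)ᵀ.mulVec (X (F y))) x :=
    (differentiableAt_vectorField_pullback (hFC2 x hx)
      (isInvertible_fderiv_of_conformal (hFdiff x hx) (hconf x hx))
      (hX _ (hmaps hx))).congr_of_eventuallyEq <| (hnear x hx).mono fun y hy =>
        smul_jac_transpose_mulVec_eq_pullback (hFdiff y hy) (hconf y hy)
  rw [isCKF_iff_lieDerivForm hX] at hckf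
  rw [isCKF_iff_lieDerivForm hY]
  intro x hx
  obtain ⟨c, hc⟩ := hckf (F x) (hmaps hx)
  have hrelated : (fun y => fderiv ℝ F y (κ y • (jac F y)ᵀ.mulVec (X (F y)))) =ᶠ[𝓝 x] X ∘ F :=
    (hnear x hx).mono fun y hy => fderiv_smul_jac_transpose_mulVec (hFdiff y hy) (hconf y hy) _
  have hmetric : ∀ᶠ y in 𝓝 x, κ y • pullbackForm F (fun _ => euclideanForm n) y = euclideanForm n :=
    (hnear x hx).mono fun y hy => smul_pullbackForm_euclideanForm (hFdiff y hy) (hconf y hy)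
  exact exists_lieDerivForm_eq_smul_of_conformal (hFC2 x hx) (hY x hx) (hX _ (hmaps hx)) hrelated
    hmetric hc

/-- pullback of a conformal Killing field by a conformal map is
conformal Killing. -/
theorem stmt_3 {n : ℕ} (hn : 3 ≤ n) (Ω Ω' : Set (Fin n → ℝ))
    (hΩ : IsOpen Ω) (hΩ' : IsOpen Ω')
    (F : (Fin n → ℝ) → (Fin n → ℝ)) (hF : ContDiffOn ℝ (⊤ : ℕ∞) F Ω')
    (hmaps : Set.MapsTo F Ω' Ω)
    (κ : (Fin n → ℝ) → ℝ) (hκ : ContDiffOn ℝ (⊤ : ℕ∞) κ Ω')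
    (hκpos : ∀ x ∈ Ω', 0 < κ x)
    (hconf : ∀ x ∈ Ω', κ x • ((jac F x)ᵀ * jac F x) = (1 : Matrix (Fin n) (Fin n) ℝ))
    (X : (Fin n → ℝ) → (Fin n → ℝ)) (hX : ContDiffOn ℝ (⊤ : ℕ∞) X Ω)
    (hckf : IsCKF Ω X) :
    IsCKF Ω' (fun x => κ x • (jac F x)ᵀ.mulVec (X (F x))) :=
  stmt_3_general hΩ' (contDiffOn_infty.1 hF 2) hmaps hconf
    (fun _ hx => (hX.contDiffAt (hΩ.mem_nhds hx)).differentiableAt (by simp)) hckf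
end
end

section
/- Let n ≥ 3, α, γ, x₀ ∈ ℝⁿ, c ∈ ℝ, and let B be a skew-symmetric real n×n matrix. Then for all x ∈ ℝⁿ: X₍α,c,B,γ₎(x − x₀) = X₍α̃,c̃,B̃,γ̃₎(x), where α̃ = α, c̃ = c − α·x₀, B̃ = B + α∧x₀, and γ̃ = γ + (α·x₀)x₀ − (1/2)|x₀|²α − c·x₀ − Bx₀. (This is the action of the translation F(x) = x − x₀ on conformal Killing vector fields of ℝⁿ.) -/
open scoped BigOperators
open Matrix

noncomputable section

/-!
Expanding `X (x - x₀)` by bilinearity, the quadratic part `(α·x)x − ½|x|²α` contributes the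
cross terms `−(α·x)x₀ − (α·x₀)x + (x₀·x)α`. The middle one is a dilation, and the other two
combine to `(x₀·x)α − (α·x)x₀ = (α ∧ x₀)x`, a rotation.
-/

section

variable {n : ℕ}

theorem dotp_eq_dotProduct (u v : Fin n → ℝ) : dotp u v = u ⬝ᵥ v := rfl

theorem normSq_eq_dotp_self (u : Fin n → ℝ) : normSq u = dotp u u := by
  simp only [normSq, dotp, sq]

theorem dotp_comm (u v : Fin n → ℝ) : dotp u v = dotp v u :=
  dotProduct_comm u v

theorem dotp_sub (u v w : Fin n → ℝ) : dotp u (v - w) = dotp u v - dotp u w :=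
  dotProduct_sub u v w

theorem normSq_sub (u v : Fin n → ℝ) :
    normSq (u - v) = normSq u - 2 * dotp u v + normSq v := by
  simp only [normSq_eq_dotp_self, dotp_sub, dotp_comm (u - v)]
  rw [dotp_comm v u]
  ring

theorem wedge_eq_vecMulVec_sub (u v : Fin n → ℝ) :
    wedge u v = vecMulVec u v - vecMulVec v u := rfl

theorem wedge_mulVec (u v w : Fin n → ℝ) :
    wedge u v *ᵥ w = dotp v w • u - dotp u w • v := by
  simp only [wedge_eq_vecMulVec_sub, sub_mulVec, vecMulVec_mulVec, op_smul_eq_smul,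
    dotp_eq_dotProduct]

theorem Xmodel_eq_smul_add (α : Fin n → ℝ) (c : ℝ) (B : Matrix (Fin n) (Fin n) ℝ)
    (γ x : Fin n → ℝ) :
    Xmodel α c B γ x = dotp α x • x - ((1 / 2) * normSq x) • α + c • x + B *ᵥ x + γ := rfl

theorem stmt_4_general (α γ x₀ : Fin n → ℝ) (c : ℝ) (B : Matrix (Fin n) (Fin n) ℝ)
    (x : Fin n → ℝ) :
    Xmodel α c B γ (x - x₀) =
      Xmodel α (c - dotp α x₀) (B + wedge α x₀)
        (γ + dotp α x₀ • x₀ - ((1 / 2) * normSq x₀) • α - c • x₀ - B *ᵥ x₀) x := by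
  simp only [Xmodel_eq_smul_add, dotp_sub, normSq_sub, mulVec_sub, add_mulVec, wedge_mulVec,
    dotp_comm x₀ x]
  module

end

/-- action of the translation `F(x) = x − x₀` on the conformal Killing
fields `X_{(α,c,B,γ)}` of `ℝⁿ`. -/
theorem stmt_4 {n : ℕ} (hn : 3 ≤ n) (α γ x₀ : Fin n → ℝ) (c : ℝ)
    (B : Matrix (Fin n) (Fin n) ℝ) (hB : Bᵀ = -B) (x : Fin n → ℝ) :
    Xmodel α c B γ (x - x₀) =
      Xmodel α (c - dotp α x₀) (B + wedge α x₀)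
        (γ + dotp α x₀ • x₀ - ((1 / 2) * normSq x₀) • α - c • x₀ - B.mulVec x₀) x :=
  stmt_4_general α γ x₀ c B x
end
end

section
/- Let n ≥ 3, let γ ∈ ℝⁿ with |γ| = 1, let s > 0, and let Ω = {x ∈ ℝⁿ : |x|² ≠ s}. Define φ(x) = (1/√s)·arctan( (−2γ·x/√s)/(|x|²/s − 1) ) on Ω. Then φ is smooth on Ω, ∇φ is nowhere vanishing on Ω, and for all x ∈ Ω: ∇φ(x)/|∇φ(x)|² = (γ·x)x − (1/2)|x|²γ + (s/2)γ. -/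
open scoped BigOperators
open Matrix

noncomputable section

/-- The weight `φ(x) = (1/√s) arctan( (−2γ·x/√s) / (|x|²/s − 1) )`. -/
def phi14 {n : ℕ} (γ : Fin n → ℝ) (s : ℝ) (x : Fin n → ℝ) : ℝ :=
  (Real.sqrt s)⁻¹ * Real.arctan ((-2 * dotp γ x / Real.sqrt s) / (normSq x / s - 1))

/-!
Since `√s φ` is `arctan (2√s (γ·x) / (s - |x|²))`, the formula
`d arctan (f / g) = (g df - f dg) / (f² + g²)` gives `∇φ = 4 X / (4 s (γ·x)² + (s - |x|²)²)`, where
`X` is the claimed Killing field. Because `|γ| = 1`, the denominator is `4 |X|²`, so `∇φ` is the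
image of `X` under the inversion `u ↦ u / |u|²` in the unit sphere. Inverting once more recovers
`X`.
-/

theorem hasFDerivAt_arctan_div {E : Type*} [NormedAddCommGroup E] [NormedSpace ℝ E]
    {f g : E → ℝ} {f' g' : E →L[ℝ] ℝ} {x : E}
    (hf : HasFDerivAt f f' x) (hg : HasFDerivAt g g' x) (hgx : g x ≠ 0) :
    HasFDerivAt (fun y => Real.arctan (f y / g y))
      ((f x ^ 2 + g x ^ 2)⁻¹ • (g x • f' - f x • g')) x := by
  have hinv : HasFDerivAt (fun y => (g y)⁻¹) (-(g x ^ 2)⁻¹ • g') x :=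
    (hasDerivAt_inv hgx).comp_hasFDerivAt x hg
  refine (hf.mul hinv).arctan.congr_fderiv ?_
  ext v
  simp only [Pi.mul_apply, _root_.smul_apply, _root_.add_apply, _root_.sub_apply, smul_eq_mul]
  have hden : 1 + (f x * (g x)⁻¹) ^ 2 = (f x ^ 2 + g x ^ 2) / g x ^ 2 := by
    field_simp
    ring
  rw [hden]
  field_simp
  ring

section EuclideanCalculus

variable {n : ℕ}

/-- The functional `y ↦ v · y`, as a continuous linear map depending linearly on `v`. A function
has gradient `v` at a point when its Fréchet derivative there is `dotpCLM v`. -/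
def dotpCLM : (Fin n → ℝ) →ₗ[ℝ] (Fin n → ℝ) →L[ℝ] ℝ :=
  LinearMap.toContinuousLinearMap.toLinearMap ∘ₗ dotProductBilin ℝ ℝ

theorem dotpCLM_apply (v y : Fin n → ℝ) : dotpCLM v y = dotp v y := rfl

theorem grad_eq_of_hasFDerivAt {φ : (Fin n → ℝ) → ℝ} {v x : Fin n → ℝ}
    (hφ : HasFDerivAt φ (dotpCLM v) x) : grad φ x = v := by
  ext i
  rw [grad, hφ.fderiv]
  exact dotProduct_single_one v i

theorem hasFDerivAt_dotp_s14 (v x : Fin n → ℝ) : HasFDerivAt (dotp v) (dotpCLM v) x :=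
  (dotpCLM v).hasFDerivAt

theorem hasFDerivAt_normSq_s14 (x : Fin n → ℝ) :
    HasFDerivAt normSq (dotpCLM ((2 : ℝ) • x)) x := by
  have hsum : HasFDerivAt normSq (∑ i, (2 • x i ^ (2 - 1)) • ContinuousLinearMap.proj i) x :=
    HasFDerivAt.fun_sum fun i _ => (hasFDerivAt_apply (𝕜 := ℝ) i x).pow 2
  refine hsum.congr_fderiv ?_
  ext y
  simp [dotpCLM_apply, dotp, Finset.mul_sum, mul_assoc]

theorem contDiff_dotp {m : WithTop ℕ∞} (v : Fin n → ℝ) : ContDiff ℝ m (dotp v) :=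
  (dotpCLM v).contDiff

theorem contDiff_normSq {m : WithTop ℕ∞} : ContDiff ℝ m (normSq : (Fin n → ℝ) → ℝ) := by
  unfold normSq
  fun_prop

end EuclideanCalculus

section NormSq

variable {n : ℕ}

theorem normSq_eq_dotProduct_self (u : Fin n → ℝ) : normSq u = u ⬝ᵥ u := by
  simp only [normSq, dotProduct, sq]

theorem normSq_eq_zero {u : Fin n → ℝ} : normSq u = 0 ↔ u = 0 := by
  rw [normSq_eq_dotProduct_self, dotProduct_self_eq_zero]

theorem normSq_smul (a : ℝ) (u : Fin n → ℝ) : normSq (a • u) = a ^ 2 * normSq u := by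
  simp only [normSq, Finset.mul_sum, Pi.smul_apply, smul_eq_mul, mul_pow]

theorem normSq_smul_add_smul (a b : ℝ) (u v : Fin n → ℝ) :
    normSq (a • u + b • v) = a ^ 2 * normSq u + 2 * a * b * dotp v u + b ^ 2 * normSq v := by
  simp only [normSq, dotp, Finset.mul_sum, ← Finset.sum_add_distrib, Pi.add_apply,
    Pi.smul_apply, smul_eq_mul]
  exact Finset.sum_congr rfl fun i _ => by ring

theorem involutive_inv_normSq_smul :
    Function.Involutive fun u : Fin n → ℝ => (normSq u)⁻¹ • u := by
  intro u
  rcases eq_or_ne u 0 with rfl | hu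
  · simp only [smul_zero]
  · have hu' : normSq u ≠ 0 := normSq_eq_zero.not.mpr hu
    have hone : ((normSq u)⁻¹ ^ 2 * normSq u)⁻¹ * (normSq u)⁻¹ = 1 := by field_simp
    simp only [normSq_smul, smul_smul, hone, one_smul]

end NormSq

section Weight

variable {n : ℕ} (γ : Fin n → ℝ) {s : ℝ} {x : Fin n → ℝ}

theorem Xmodel_zero_zero (β x : Fin n → ℝ) :
    Xmodel γ 0 0 β x = dotp γ x • x - ((1 / 2) * normSq x) • γ + β := by
  ext k
  simp [Xmodel]

theorem Xmodel_half_smul (s : ℝ) (x : Fin n → ℝ) :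
    Xmodel γ 0 0 ((s / 2) • γ) x = dotp γ x • x + ((s - normSq x) / 2) • γ := by
  rw [Xmodel_zero_zero]
  module

theorem normSq_Xmodel_half_smul (s : ℝ) (x : Fin n → ℝ) :
    normSq (Xmodel γ 0 0 ((s / 2) • γ) x)
      = s * dotp γ x ^ 2 + ((s - normSq x) / 2) ^ 2 * normSq γ := by
  rw [Xmodel_half_smul, normSq_smul_add_smul]
  ring

theorem Xmodel_half_smul_ne_zero (hγ : γ ≠ 0) (hs : 0 < s) (hx : normSq x ≠ s) :
    Xmodel γ 0 0 ((s / 2) • γ) x ≠ 0 := by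
  have hγ' : 0 < normSq γ :=
    (Finset.sum_nonneg fun i _ => sq_nonneg (γ i)).lt_of_ne' (normSq_eq_zero.not.mpr hγ)
  rw [ne_eq, ← normSq_eq_zero, normSq_Xmodel_half_smul]
  positivity

theorem phi14_eq_arctan_div (hs : 0 < s) :
    phi14 γ s = fun x => (√s)⁻¹ * Real.arctan (2 * √s * dotp γ x / (s - normSq x)) := by
  ext x
  have hden : normSq x / s - 1 = -(s - normSq x) / √s ^ 2 := by
    rw [Real.sq_sqrt hs.le]
    field_simp
    ring
  have harg : -2 * dotp γ x / √s / (normSq x / s - 1) = 2 * √s * dotp γ x / (s - normSq x) := by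
    rw [hden, neg_div, div_neg, ← neg_div, div_div_eq_mul_div]
    congr 1
    field_simp
  rw [phi14, harg]

theorem contDiffAt_phi14 {m : WithTop ℕ∞} (hs : 0 < s) (hx : normSq x ≠ s) :
    ContDiffAt ℝ m (phi14 γ s) x := by
  rw [phi14_eq_arctan_div γ hs]
  have hquot : ContDiffAt ℝ m (fun y => 2 * √s * dotp γ y / (s - normSq y)) x :=
    (contDiffAt_const.mul (contDiff_dotp γ).contDiffAt).fun_div
      (contDiffAt_const.sub contDiff_normSq.contDiffAt) (sub_ne_zero.mpr hx.symm)
  exact contDiffAt_const.mul (Real.contDiff_arctan.contDiffAt.comp x hquot)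

theorem hasFDerivAt_phi14 (hs : 0 < s) (hx : normSq x ≠ s) :
    HasFDerivAt (phi14 γ s)
      (dotpCLM ((4 / (4 * s * dotp γ x ^ 2 + (s - normSq x) ^ 2)) •
        Xmodel γ 0 0 ((s / 2) • γ) x)) x := by
  have hnum := (hasFDerivAt_dotp_s14 γ x).const_mul (2 * √s)
  have hden := (hasFDerivAt_normSq_s14 x).const_sub s
  have hsq : (2 * √s * dotp γ x) ^ 2 = 4 * s * dotp γ x ^ 2 := by
    rw [mul_pow, mul_pow, Real.sq_sqrt hs.le]
    ring
  rw [phi14_eq_arctan_div γ hs]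
  refine ((hasFDerivAt_arctan_div hnum hden
    (sub_ne_zero.mpr hx.symm)).const_mul (√s)⁻¹).congr_fderiv ?_
  rw [hsq, Xmodel_half_smul]
  simp only [← map_smul, ← map_neg, ← map_sub]
  congr 1
  match_scalars <;> field_simp <;> ring

theorem grad_phi14 (hγ : normSq γ = 1) (hs : 0 < s) (hx : normSq x ≠ s) :
    grad (phi14 γ s) x =
      (normSq (Xmodel γ 0 0 ((s / 2) • γ) x))⁻¹ • Xmodel γ 0 0 ((s / 2) • γ) x := by
  rw [grad_eq_of_hasFDerivAt (hasFDerivAt_phi14 γ hs hx), normSq_Xmodel_half_smul, hγ]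
  congr 1
  field_simp
  ring

end Weight

theorem stmt_14_general {n : ℕ} (γ : Fin n → ℝ) (hγ : normSq γ = 1)
    (s : ℝ) (hs : 0 < s) (Ω : Set (Fin n → ℝ)) (hΩdef : Ω = {x | normSq x ≠ s}) :
    ContDiffOn ℝ (⊤ : ℕ∞) (phi14 γ s) Ω ∧
    (∀ x ∈ Ω, grad (phi14 γ s) x ≠ 0) ∧
    (∀ x ∈ Ω, (normSq (grad (phi14 γ s) x))⁻¹ • grad (phi14 γ s) x
      = dotp γ x • x - ((1 / 2) * normSq x) • γ + (s / 2) • γ) := by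
  subst hΩdef
  have hγ0 : γ ≠ 0 := normSq_eq_zero.not.mp (hγ.trans_ne one_ne_zero)
  refine ⟨fun x hx => (contDiffAt_phi14 γ hs hx).contDiffWithinAt, fun x hx => ?_, fun x hx => ?_⟩
  · have hX := Xmodel_half_smul_ne_zero γ hγ0 hs hx
    rw [grad_phi14 γ hγ hs hx]
    exact smul_ne_zero (inv_ne_zero (normSq_eq_zero.not.mpr hX)) hX
  · rw [← Xmodel_zero_zero, grad_phi14 γ hγ hs hx]
    exact involutive_inv_normSq_smul _

/-- `phi14` is smooth with nonvanishing gradient on `{|x|² ≠ s}` and its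
associated conformal Killing field is `(γ·x)x − ½|x|²γ + (s/2)γ`. -/
theorem stmt_14 {n : ℕ} (hn : 3 ≤ n) (γ : Fin n → ℝ) (hγ : normSq γ = 1)
    (s : ℝ) (hs : 0 < s) (Ω : Set (Fin n → ℝ)) (hΩdef : Ω = {x | normSq x ≠ s}) :
    ContDiffOn ℝ (⊤ : ℕ∞) (phi14 γ s) Ω ∧
    (∀ x ∈ Ω, grad (phi14 γ s) x ≠ 0) ∧
    (∀ x ∈ Ω, (normSq (grad (phi14 γ s) x))⁻¹ • grad (phi14 γ s) x
      = dotp γ x • x - ((1 / 2) * normSq x) • γ + (s / 2) • γ) :=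
  stmt_14_general γ hγ s hs Ω hΩdef
end
end

section
/- Let n ≥ 3, let e₁, e₂ denote the first two standard basis vectors of ℝⁿ, and define F(x) = (x − e₁)/|x − e₁|² + (1/2)e₁ for x ≠ e₁. Then for every x ∈ ℝⁿ with x ≠ e₁ and |x| ≠ 1: e₁·F(x) = (|x|² − 1)/(2|x − e₁|²) (in particular e₁·F(x) ≠ 0), and (e₂·F(x))/(e₁·F(x)) = 2(e₂·x)/(|x|² − 1). -/
open scoped BigOperators
open Matrix

noncomputable section

/-- The `i`-th standard basis vector of `ℝⁿ`. -/
def stdBasis {n : ℕ} (i : ℕ) (h : i < n) : Fin n → ℝ := Pi.single (⟨i, h⟩ : Fin n) (1 : ℝ)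

/-- The conformal map `F(x) = (x − e₁)/|x − e₁|² + ½ e₁`. -/
def F17 {n : ℕ} (e₁ : Fin n → ℝ) (x : Fin n → ℝ) : Fin n → ℝ :=
  (normSq (x - e₁))⁻¹ • (x - e₁) + (1 / 2 : ℝ) • e₁

section

variable {n : ℕ}

theorem dotp_self (u : Fin n → ℝ) : dotp u u = normSq u := (normSq_eq_dotProduct_self u).symm

theorem normSq_sub_eq_zero {u v : Fin n → ℝ} : normSq (u - v) = 0 ↔ u = v := by
  rw [normSq_eq_dotProduct_self, dotProduct_self_eq_zero, sub_eq_zero]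

theorem normSq_stdBasis {i : ℕ} (hi : i < n) : normSq (stdBasis i hi : Fin n → ℝ) = 1 := by
  simp [normSq_eq_dotProduct_self, _root_.stdBasis]

theorem dotp_stdBasis_of_ne {i j : ℕ} (hi : i < n) (hj : j < n) (hij : i ≠ j) :
    dotp (stdBasis i hi : Fin n → ℝ) (stdBasis j hj) = 0 := by
  simp [dotp_eq_dotProduct, _root_.stdBasis, hij]

theorem dotp_F17 (u e x : Fin n → ℝ) :
    dotp u (F17 e x) = (dotp u x - dotp u e) / normSq (x - e) + dotp u e / 2 := by
  simp only [F17, dotp_eq_dotProduct, dotProduct_add, dotProduct_smul, dotProduct_sub, smul_eq_mul]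
  ring

theorem dotp_F17_of_dotp_eq_zero {u e : Fin n → ℝ} (hue : dotp u e = 0) (x : Fin n → ℝ) :
    dotp u (F17 e x) = dotp u x / normSq (x - e) := by
  rw [dotp_F17, hue, sub_zero, zero_div, add_zero]

theorem dotp_self_F17 {e x : Fin n → ℝ} (he : normSq e = 1) (hx : x ≠ e) :
    dotp e (F17 e x) = (normSq x - 1) / (2 * normSq (x - e)) := by
  have hsub : normSq (x - e) ≠ 0 := normSq_sub_eq_zero.not.mpr hx
  have hexpand : normSq (x - e) = normSq x - 2 * dotp e x + 1 := by
    rw [normSq_sub, he, dotp_comm]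
  calc
    dotp e (F17 e x) = (dotp e x - 1) / normSq (x - e) + 1 / 2 := by
      rw [dotp_F17, dotp_self, he]
    _ = (2 * (dotp e x - 1) + normSq (x - e)) / (2 * normSq (x - e)) := by field_simp
    _ = (normSq x - 1) / (2 * normSq (x - e)) := by
      congr 1
      linear_combination hexpand

theorem stmt_17_general {e u x : Fin n → ℝ} (he : normSq e = 1) (hue : dotp u e = 0)
    (hx : normSq x ≠ 1) :
    dotp e (F17 e x) = (normSq x - 1) / (2 * normSq (x - e)) ∧
    dotp e (F17 e x) ≠ 0 ∧
    dotp u (F17 e x) / dotp e (F17 e x) = 2 * dotp u x / (normSq x - 1) := by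
  have hxe : x ≠ e := fun h => hx (h ▸ he)
  have hsub : normSq (x - e) ≠ 0 := normSq_sub_eq_zero.not.mpr hxe
  have hnum : normSq x - 1 ≠ 0 := sub_ne_zero.mpr hx
  rw [dotp_self_F17 he hxe, dotp_F17_of_dotp_eq_zero hue]
  refine ⟨rfl, div_ne_zero hnum (mul_ne_zero two_ne_zero hsub), ?_⟩
  field_simp

end

/-- for the conformal map `F(x) = (x−e₁)/|x−e₁|² + ½e₁` and `|x| ≠ 1`,
`e₁·F(x) = (|x|²−1)/(2|x−e₁|²) ≠ 0` and `(e₂·F(x))/(e₁·F(x)) = 2(e₂·x)/(|x|²−1)`,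
so the two arctan-type weights lie in the same conformal orbit. -/
theorem stmt_17 {n : ℕ} (hn : 3 ≤ n) (x : Fin n → ℝ)
    (hx1 : x ≠ stdBasis 0 (by omega)) (hx2 : normSq x ≠ 1) :
    dotp (stdBasis 0 (by omega)) (F17 (stdBasis 0 (by omega)) x)
        = (normSq x - 1) / (2 * normSq (x - stdBasis 0 (by omega))) ∧
    dotp (stdBasis 0 (by omega)) (F17 (stdBasis 0 (by omega)) x) ≠ 0 ∧
    dotp (stdBasis 1 (by omega)) (F17 (stdBasis 0 (by omega)) x)
        / dotp (stdBasis 0 (by omega)) (F17 (stdBasis 0 (by omega)) x)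
      = 2 * dotp (stdBasis 1 (by omega)) x / (normSq x - 1) := by
  exact stmt_17_general (normSq_stdBasis _) (dotp_stdBasis_of_ne _ _ one_ne_zero) hx2
end
end

section
/- Let T be a symmetric bilinear form on Euclidean ℝ³. Suppose there exist linearly independent vectors v₁, v₂, v₃ ∈ ℝ³ such that for each i ∈ {1,2,3}: T(vᵢ, vᵢ) = 0 and T(w, w′) = 0 for all w, w′ ∈ ℝ³ orthogonal to vᵢ. Then T = 0. -/
open scoped BigOperators

noncomputable section

/-!
Let `H₀, H₁, H₂` be the hyperplanes orthogonal to the three directions. A vector `x` in two of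
them, say `H₀` and `H₁`, satisfies `T x y = 0` for every `y` in `H₀ + H₁`, which is the whole space.
So the kernel of `T` contains the three pairwise intersections, and these span the space because
the hyperplanes are independent.
-/

theorem inf_sup_inf_sup_inf_eq_top_of_codisjoint {α : Type*} [Lattice α] [BoundedOrder α]
    [IsModularLattice α] {a b c : α} (ha : Codisjoint a (b ⊓ c)) (hb : Codisjoint b (a ⊓ c)) :
    a ⊓ b ⊔ a ⊓ c ⊔ b ⊓ c = ⊤ := by
  have inf_sup_inf_eq : a ⊓ b ⊔ a ⊓ c = a :=
    calc a ⊓ b ⊔ a ⊓ c = (a ⊓ c ⊔ b) ⊓ a := by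
          rw [sup_inf_assoc_of_le b inf_le_left, sup_comm, inf_comm b a]
      _ = a := by rw [hb.symm.eq_top, top_inf_eq]
  rw [inf_sup_inf_eq, ha.eq_top]

theorem inf_le_ker_of_codisjoint {R M N P : Type*} [CommSemiring R]
    [AddCommMonoid M] [AddCommMonoid N] [AddCommMonoid P] [Module R M] [Module R N] [Module R P]
    {T : M →ₗ[R] N →ₗ[R] P} {p q : Submodule R M} {p' q' : Submodule R N}
    (hcod : Codisjoint p' q') (hp : ∀ x ∈ p, ∀ y ∈ p', T x y = 0)
    (hq : ∀ x ∈ q, ∀ y ∈ q', T x y = 0) : p ⊓ q ≤ LinearMap.ker T := by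
  rintro x ⟨hxp, hxq⟩
  have sup_le_ker : p' ⊔ q' ≤ LinearMap.ker (T x) := sup_le (hp x hxp) (hq x hxq)
  exact LinearMap.ker_eq_top.mp (top_le_iff.mp (hcod.eq_top ▸ sup_le_ker))

section Functionals

variable {K V : Type*} [Field K] [AddCommGroup V] [Module K V]

theorem codisjoint_ker_iInf_ker_of_linearIndependent {ι : Type*} {f : ι → Module.Dual K V}
    (hf : LinearIndependent K f) {i : ι} {s : Set ι} (hs : s.Finite) (hi : i ∉ s) :
    Codisjoint (LinearMap.ker (f i)) (⨅ j ∈ s, LinearMap.ker (f j)) := by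
  have isCoatom_ker : IsCoatom (LinearMap.ker (f i)) :=
    LinearMap.isCoatom_ker_of_surjective (LinearMap.surjective (hf.ne_zero i))
  rw [← isCoatom_ker.not_le_iff_codisjoint, iInf_subtype']
  intro hle
  have := hs.to_subtype
  have mem_span : f i ∈ Submodule.span K (Set.range fun j : s ↦ f j) :=
    mem_span_of_iInf_ker_le_ker hle
  rw [← Set.image_eq_range] at mem_span
  exact hf.notMem_span_image hi mem_span

theorem stmt_19_general {M : Type*} [AddCommMonoid M] [Module K M] (T : V →ₗ[K] V →ₗ[K] M)
    (f : Fin 3 → Module.Dual K V) (hf : LinearIndependent K f)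
    (hT : ∀ i, ∀ x ∈ LinearMap.ker (f i), ∀ y ∈ LinearMap.ker (f i), T x y = 0) :
    T = 0 := by
  have codisjoint_inf {i j k : Fin 3} (hij : i ≠ j) (hik : i ≠ k) :
      Codisjoint (LinearMap.ker (f i)) (LinearMap.ker (f j) ⊓ LinearMap.ker (f k)) := by
    have := codisjoint_ker_iInf_ker_of_linearIndependent hf (Set.toFinite {j, k})
      (by simp [hij, hik] : i ∉ ({j, k} : Set (Fin 3)))
    rwa [iInf_pair] at this
  have inf_le_ker {i j : Fin 3} (hij : i ≠ j) :
      LinearMap.ker (f i) ⊓ LinearMap.ker (f j) ≤ LinearMap.ker T :=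
    inf_le_ker_of_codisjoint ((codisjoint_inf hij hij).mono_right inf_le_left) (hT i) (hT j)
  rw [← LinearMap.ker_eq_top, ← top_le_iff, ← inf_sup_inf_sup_inf_eq_top_of_codisjoint
    (codisjoint_inf (i := 0) (j := 1) (k := 2) (by decide) (by decide))
    (codisjoint_inf (by decide) (by decide))]
  exact sup_le (sup_le (inf_le_ker (by decide)) (inf_le_ker (by decide))) (inf_le_ker (by decide))

end Functionals

/-- a symmetric bilinear form on Euclidean `ℝ³` admitting three linearly
independent eigenflag directions (i.e. vectors `v` with `T(v,v) = 0` and `T(w,w') = 0`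
for all `w, w' ⊥ v`) vanishes identically. -/
theorem stmt_19 (T : (Fin 3 → ℝ) →ₗ[ℝ] (Fin 3 → ℝ) →ₗ[ℝ] ℝ)
    (hsymm : ∀ u v : Fin 3 → ℝ, T u v = T v u)
    (v : Fin 3 → (Fin 3 → ℝ)) (hli : LinearIndependent ℝ v)
    (h : ∀ i : Fin 3, T (v i) (v i) = 0 ∧
      ∀ w w' : Fin 3 → ℝ, dotp w (v i) = 0 → dotp w' (v i) = 0 → T w w' = 0) :
    T = 0 := by
  have dotp_eq (w u : Fin 3 → ℝ) : dotp w u = dotProductEquiv ℝ (Fin 3) u w := dotProduct_comm w u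
  exact stmt_19_general T (dotProductEquiv ℝ (Fin 3) ∘ v)
    (hli.map' _ (dotProductEquiv ℝ (Fin 3)).ker)
    fun i w hw w' hw' ↦ (h i).2 w w' ((dotp_eq w _).trans hw) ((dotp_eq w' _).trans hw')
end
end
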